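/- arXiv:2302.02426 — 3 statements merged into one kernel-verified Lean document; each statement's English description precedes it below -/
import Mathlib

section
/- Let (Ω, F, P) be a probability space with a filtration (H_t)_{t∈ℕ} and let (Z_t)_{t∈ℕ} be a real-valued process adapted to (H_t) with Z_0 = 0. Let t₀ be a positive integer and let θ ≥ 0 and 0 < ν ≤ ν_max be constants such that: (i) for every t, almost surely on the event {Z_t ≥ θ}, E[Z_{t+t₀} − Z_t | H_t] ≤ −ν t₀; and (ii) |Z_{t+1} − Z_t| ≤ ν_max almost surely for every t. Then for every t and every p ∈ (0,1), P(Z_t ≥ z) ≤ p, where z = θ + t₀ ν_max + t₀ (4ν_max²/ν)(log(8ν_max²/ν²) + log(1/p)). -/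
open MeasureTheory

/-! For small `r > 0` the exponential moment `E[exp (r Z_t)]` obeys an affine recursion along steps
of length `t₀`. On `{Z_t ≥ θ}` expanding `exp (r (Z_{t+t₀} - Z_t))` to second order, the negative
drift beats the quadratic error and the moment contracts by a factor `ρ < 1`; off this event
`Z_{t+t₀}` is at most `θ + t₀ ν_max`. Hence the moment stays below the fixed point
`exp (r (θ + t₀ ν_max)) / (1 - ρ)`, and Chernoff's inequality turns this into the tail bound. -/

section

open ProbabilityTheory Real

lemma exp_le_one_add_add_sq {x : ℝ} (hx : |x| ≤ 1) : exp x ≤ 1 + x + x ^ 2 := by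
  linarith [le_of_abs_le (abs_exp_sub_one_sub_id_le hx)]

lemma exp_mul_add_le {r L x : ℝ} (hr : 0 ≤ r) (hrL : r * L ≤ 1) (hx : |x| ≤ L) (y : ℝ) :
    exp (r * (y + x)) ≤ (1 + (r * L) ^ 2) * exp (r * y) + r * (exp (r * y) * x) := by
  have hrx : |r * x| ≤ r * L := by
    rw [abs_mul, abs_of_nonneg hr]
    exact mul_le_mul_of_nonneg_left hx hr
  have hsq : (r * x) ^ 2 ≤ (r * L) ^ 2 := sq_le_sq.mpr (hrx.trans (le_abs_self _))
  calc exp (r * (y + x)) = exp (r * y) * exp (r * x) := by rw [mul_add, exp_add]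
    _ ≤ exp (r * y) * (1 + r * x + (r * L) ^ 2) := by
        gcongr
        linarith [exp_le_one_add_add_sq (hrx.trans hrL)]
    _ = (1 + (r * L) ^ 2) * exp (r * y) + r * (exp (r * y) * x) := by ring

lemma le_of_add_le_mul_add {R : Type*} [Semiring R] [PartialOrder R] [IsOrderedRing R]
    {a : ℕ → R} {k : ℕ} {ρ b C : R} (hk : 0 < k) (hρ : 0 ≤ ρ) (hC : ρ * C + b ≤ C)
    (hinit : ∀ n < k, a n ≤ C) (hstep : ∀ n, a (n + k) ≤ ρ * a n + b) (n : ℕ) : a n ≤ C := by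
  induction n using Nat.strong_induction_on with
  | _ n ih =>
    rcases lt_or_ge n k with hn | hn
    · exact hinit n hn
    · obtain ⟨m, rfl⟩ := Nat.exists_eq_add_of_le' hn
      calc a (m + k) ≤ ρ * a m + b := hstep m
        _ ≤ ρ * C + b := by gcongr; exact ih m (by omega)
        _ ≤ C := hC

variable {Ω : Type*} {mΩ : MeasurableSpace Ω} {μ : Measure Ω}

lemma ae_norm_sub_le_mul {E : Type*} [SeminormedAddCommGroup E] {Z : ℕ → Ω → E} {c : ℝ}
    (hZ : ∀ t, ∀ᵐ ω ∂μ, ‖Z (t + 1) ω - Z t ω‖ ≤ c) (t n : ℕ) :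
    ∀ᵐ ω ∂μ, ‖Z (t + n) ω - Z t ω‖ ≤ n * c := by
  filter_upwards [ae_all_iff.mpr hZ] with ω hω
  have hsum := dist_le_Ico_sum_of_dist_le (f := fun i ↦ Z i ω) (Nat.le_add_right t n)
    (d := fun _ ↦ c) fun {i} _ _ ↦ by rw [dist_eq_norm']; exact hω i
  simpa [dist_eq_norm'] using hsum

section CondExp

variable {m : MeasurableSpace Ω}

lemma setIntegral_mul_le_of_condExp_le (hm : m ≤ mΩ) [SigmaFinite (μ.trim hm)] {s : Set Ω}
    (hs : MeasurableSet[m] s) {g X : Ω → ℝ} {c : ℝ} (hg : StronglyMeasurable[m] g) (hg0 : 0 ≤ g)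
    (hgint : Integrable g μ) (hX : Integrable X μ) (hgX : Integrable (g * X) μ)
    (hc : ∀ᵐ ω ∂μ, ω ∈ s → (μ[X | m]) ω ≤ c) :
    ∫ ω in s, g ω * X ω ∂μ ≤ c * ∫ ω in s, g ω ∂μ := by
  calc ∫ ω in s, g ω * X ω ∂μ = ∫ ω in s, (μ[g * X | m]) ω ∂μ :=
        (setIntegral_condExp hm hgX hs).symm
    _ ≤ ∫ ω in s, c * g ω ∂μ := by
        refine setIntegral_mono_on_ae integrable_condExp.integrableOn
          (hgint.const_mul c).integrableOn (hm s hs) ?_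
        filter_upwards [condExp_mul_of_stronglyMeasurable_left hg hgX hX, hc] with ω hpull hω hωs
        rw [hpull, Pi.mul_apply, mul_comm c]
        exact mul_le_mul_of_nonneg_left (hω hωs) (hg0 ω)
    _ = c * ∫ ω in s, g ω ∂μ := integral_const_mul c _

lemma integrable_exp_mul_add_of_abs_le {X Y : Ω → ℝ} {r L : ℝ} (hX : AEStronglyMeasurable[mΩ] X μ)
    (hY : Integrable (fun ω ↦ exp (r * Y ω)) μ) (hXL : ∀ᵐ ω ∂μ, |X ω| ≤ L) :
    Integrable (fun ω ↦ exp (r * (Y ω + X ω))) μ := by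
  simp only [mul_add, exp_add]
  refine hY.mul_bdd (c := exp (|r| * L))
    (continuous_exp.comp_aestronglyMeasurable (hX.const_mul r)) ?_
  filter_upwards [hXL] with ω hω
  rw [norm_of_nonneg (exp_nonneg _), exp_le_exp]
  calc r * X ω ≤ |r| * |X ω| := (le_abs_self _).trans (abs_mul _ _).le
    _ ≤ |r| * L := by gcongr

lemma setIntegral_exp_mul_add_le_of_condExp_le [IsFiniteMeasure μ] (hm : m ≤ mΩ) {s : Set Ω}
    (hs : MeasurableSet[m] s) {X Y : Ω → ℝ} {r L c : ℝ} (hr : 0 ≤ r) (hrL : r * L ≤ 1)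
    (hY : Measurable[m] Y) (hX : AEStronglyMeasurable[mΩ] X μ)
    (hYint : Integrable (fun ω ↦ exp (r * Y ω)) μ) (hXL : ∀ᵐ ω ∂μ, |X ω| ≤ L)
    (hc : ∀ᵐ ω ∂μ, ω ∈ s → (μ[X | m]) ω ≤ c) :
    ∫ ω in s, exp (r * (Y ω + X ω)) ∂μ ≤
      (1 + r * c + (r * L) ^ 2) * ∫ ω in s, exp (r * Y ω) ∂μ := by
  have hprod : Integrable (fun ω ↦ exp (r * Y ω) * X ω) μ := hYint.mul_bdd hX hXL
  have hdrift : ∫ ω in s, exp (r * Y ω) * X ω ∂μ ≤ c * ∫ ω in s, exp (r * Y ω) ∂μ :=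
    setIntegral_mul_le_of_condExp_le hm hs
      (measurable_exp.comp (hY.const_mul r)).stronglyMeasurable (fun _ ↦ exp_nonneg _) hYint
      (.of_bound hX L hXL) hprod hc
  calc ∫ ω in s, exp (r * (Y ω + X ω)) ∂μ
      ≤ ∫ ω in s, ((1 + (r * L) ^ 2) * exp (r * Y ω) + r * (exp (r * Y ω) * X ω)) ∂μ := by
        refine setIntegral_mono_ae (integrable_exp_mul_add_of_abs_le hX hYint hXL).integrableOn
          ((hYint.const_mul _).add (hprod.const_mul r)).integrableOn ?_
        filter_upwards [hXL] with ω hω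
        exact exp_mul_add_le hr hrL hω (Y ω)
    _ = (1 + (r * L) ^ 2) * ∫ ω in s, exp (r * Y ω) ∂μ
          + r * ∫ ω in s, exp (r * Y ω) * X ω ∂μ := by
        rw [integral_add (hYint.const_mul _).integrableOn (hprod.const_mul r).integrableOn,
          integral_const_mul, integral_const_mul]
    _ ≤ (1 + r * c + (r * L) ^ 2) * ∫ ω in s, exp (r * Y ω) ∂μ := by
        linarith [mul_le_mul_of_nonneg_left hdrift hr]

variable [IsProbabilityMeasure μ]

lemma mgf_add_le_of_condExp_le (hm : m ≤ mΩ) {X Y : Ω → ℝ} {r L θ c : ℝ} (hr : 0 ≤ r)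
    (hrL : r * L ≤ 1) (hρ : 0 ≤ 1 + r * c + (r * L) ^ 2) (hY : Measurable[m] Y)
    (hX : AEStronglyMeasurable[mΩ] X μ) (hYint : Integrable (fun ω ↦ exp (r * Y ω)) μ)
    (hXL : ∀ᵐ ω ∂μ, |X ω| ≤ L) (hc : ∀ᵐ ω ∂μ, θ ≤ Y ω → (μ[X | m]) ω ≤ c) :
    mgf (Y + X) μ r ≤ (1 + r * c + (r * L) ^ 2) * mgf Y μ r + exp (r * (θ + L)) := by
  set s : Set Ω := {ω | θ ≤ Y ω}
  have hs : MeasurableSet[m] s := hY measurableSet_Ici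
  have hsum := integrable_exp_mul_add_of_abs_le hX hYint hXL
  have hle_mgf : ∫ ω in s, exp (r * Y ω) ∂μ ≤ mgf Y μ r :=
    setIntegral_le_integral hYint (ae_of_all _ fun _ ↦ exp_nonneg _)
  have hcompl : ∫ ω in sᶜ, exp (r * (Y ω + X ω)) ∂μ ≤ exp (r * (θ + L)) := by
    calc ∫ ω in sᶜ, exp (r * (Y ω + X ω)) ∂μ ≤ ∫ _ in sᶜ, exp (r * (θ + L)) ∂μ := by
          refine setIntegral_mono_on_ae hsum.integrableOn (integrable_const _).integrableOn
            (hm s hs).compl ?_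
          filter_upwards [hXL] with ω hω hωs
          have hYθ : Y ω < θ := not_le.mp hωs
          have hXω : X ω ≤ L := le_of_abs_le hω
          gcongr
      _ ≤ exp (r * (θ + L)) := by
          rw [setIntegral_const, smul_eq_mul]
          exact mul_le_of_le_one_left (exp_nonneg _) measureReal_le_one
  calc mgf (Y + X) μ r
      = ∫ ω in s, exp (r * (Y ω + X ω)) ∂μ + ∫ ω in sᶜ, exp (r * (Y ω + X ω)) ∂μ :=
        (integral_add_compl (hm s hs) hsum).symm
    _ ≤ (1 + r * c + (r * L) ^ 2) * ∫ ω in s, exp (r * Y ω) ∂μ + exp (r * (θ + L)) :=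
        add_le_add (setIntegral_exp_mul_add_le_of_condExp_le hm hs hr hrL hY hX hYint hXL hc)
          hcompl
    _ ≤ (1 + r * c + (r * L) ^ 2) * mgf Y μ r + exp (r * (θ + L)) := by gcongr

end CondExp

lemma measureReal_ge_add_log_le_of_mgf_le [IsFiniteMeasure μ] {X : Ω → ℝ} {r a B p : ℝ}
    (hr : 0 < r) (hB : 0 < B) (hp : 0 < p) (hint : Integrable (fun ω ↦ exp (r * X ω)) μ)
    (hmgf : mgf X μ r ≤ B * exp (r * a)) :
    μ.real {ω | a + r⁻¹ * (log B + log (1 / p)) ≤ X ω} ≤ p := by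
  set z := a + r⁻¹ * (log B + log (1 / p))
  have hz : -r * z = -(r * a) + -log B + log p := by
    simp only [z, one_div, log_inv]
    field_simp
    ring
  calc μ.real {ω | z ≤ X ω} ≤ exp (-r * z) * mgf X μ r :=
        measure_ge_le_exp_mul_mgf z hr.le hint
    _ ≤ exp (-r * z) * (B * exp (r * a)) := by gcongr
    _ = p := by
        rw [hz, exp_add, exp_add, exp_neg, exp_neg, exp_log hB, exp_log hp]
        field_simp

section Drift

variable [IsProbabilityMeasure μ] {ℱ : Filtration ℕ mΩ} {Z : ℕ → Ω → ℝ} {k : ℕ} {r L d θ : ℝ}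

theorem mgf_le_of_drift (hZ : Adapted ℱ Z) (hk : 0 < k) (hr : 0 ≤ r) (hrL : r * L ≤ 1)
    (hδ0 : 0 < r * d - (r * L) ^ 2) (hδ1 : r * d - (r * L) ^ 2 ≤ 1)
    (hint : ∀ t, Integrable (fun ω ↦ exp (r * Z t ω)) μ)
    (hinit : ∀ t < k, ∀ᵐ ω ∂μ, Z t ω ≤ θ + L)
    (hbdd : ∀ t, ∀ᵐ ω ∂μ, |Z (t + k) ω - Z t ω| ≤ L)
    (hdrift : ∀ t, ∀ᵐ ω ∂μ, θ ≤ Z t ω → (μ[Z (t + k) - Z t | ℱ t]) ω ≤ -d) (t : ℕ) :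
    mgf (Z t) μ r ≤ exp (r * (θ + L)) / (r * d - (r * L) ^ 2) := by
  have hmeas (t : ℕ) : Measurable (Z t) := (hZ t).mono (ℱ.le t) le_rfl
  have hρ : 0 ≤ 1 + r * -d + (r * L) ^ 2 := by linarith
  have hfixed : (1 + r * -d + (r * L) ^ 2) * (exp (r * (θ + L)) / (r * d - (r * L) ^ 2))
      + exp (r * (θ + L)) = exp (r * (θ + L)) / (r * d - (r * L) ^ 2) := by
    linear_combination -div_mul_cancel₀ (exp (r * (θ + L))) hδ0.ne'
  refine le_of_add_le_mul_add (a := fun t ↦ mgf (Z t) μ r) hk hρ (b := exp (r * (θ + L)))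
    hfixed.le (fun n hn ↦ ?_) (fun n ↦ ?_) t
  · calc mgf (Z n) μ r ≤ mgf (fun _ ↦ θ + L) μ r :=
          mgf_mono_of_nonneg (hinit n hn) hr (integrable_const _)
      _ = exp (r * (θ + L)) := mgf_const _
      _ ≤ exp (r * (θ + L)) / (r * d - (r * L) ^ 2) := le_div_self (exp_nonneg _) hδ0 hδ1
  · simpa only [add_sub_cancel] using
      mgf_add_le_of_condExp_le (ℱ.le n) hr hrL hρ (hZ n)
        ((hmeas _).sub (hmeas n)).aestronglyMeasurable (hint n) (hbdd n) (hdrift n)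

theorem measureReal_ge_le_of_drift (hZ : Adapted ℱ Z) (hk : 0 < k) (hd : 0 < d) (hdL : d ≤ L)
    (hint : ∀ t, Integrable (fun ω ↦ exp (d / (4 * L ^ 2) * Z t ω)) μ)
    (hinit : ∀ t < k, ∀ᵐ ω ∂μ, Z t ω ≤ θ + L)
    (hbdd : ∀ t, ∀ᵐ ω ∂μ, |Z (t + k) ω - Z t ω| ≤ L)
    (hdrift : ∀ t, ∀ᵐ ω ∂μ, θ ≤ Z t ω → (μ[Z (t + k) - Z t | ℱ t]) ω ≤ -d) (t : ℕ)
    {p : ℝ} (hp : 0 < p) :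
    μ.real {ω | θ + L + 4 * L ^ 2 / d * (log (8 * L ^ 2 / d ^ 2) + log (1 / p)) ≤ Z t ω} ≤ p := by
  have hL : 0 < L := hd.trans_le hdL
  set r := d / (4 * L ^ 2) with hr
  set q := d / L with hq
  have : 0 < q := div_pos hd hL
  have hq1 : q ≤ 1 := (div_le_one hL).mpr hdL
  have hrL : r * L = q / 4 := by rw [hr, hq]; field_simp
  have hδ : r * d - (r * L) ^ 2 = 3 / 16 * q ^ 2 := by rw [hr, hq]; field_simp; norm_num
  have hmgf : mgf (Z t) μ r ≤ 8 * L ^ 2 / d ^ 2 * exp (r * (θ + L)) := by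
    calc mgf (Z t) μ r ≤ exp (r * (θ + L)) / (r * d - (r * L) ^ 2) :=
          mgf_le_of_drift hZ hk (by positivity) (by linarith) (by rw [hδ]; positivity)
            (by rw [hδ]; nlinarith) hint hinit hbdd hdrift t
      _ = 2 / 3 * (8 * L ^ 2 / d ^ 2 * exp (r * (θ + L))) := by
          rw [hδ, hq]
          field_simp
          norm_num
      _ ≤ 8 * L ^ 2 / d ^ 2 * exp (r * (θ + L)) :=
          mul_le_of_le_one_left (by positivity) (by norm_num)
  rw [← inv_div d (4 * L ^ 2)]
  exact measureReal_ge_add_log_le_of_mgf_le (by positivity) (by positivity) hp (hint t) hmgf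

end Drift

theorem stmt4_general [IsProbabilityMeasure μ] {ℱ : Filtration ℕ mΩ} {Z : ℕ → Ω → ℝ}
    (hZ : Adapted ℱ Z) {t₀ : ℕ} (ht₀ : 0 < t₀) {θ ν νmax : ℝ} (hZ0 : ∀ᵐ ω ∂μ, Z 0 ω ≤ θ)
    (hν : 0 < ν) (hννmax : ν ≤ νmax)
    (hdrift : ∀ t, ∀ᵐ ω ∂μ, θ ≤ Z t ω → (μ[Z (t + t₀) - Z t | ℱ t]) ω ≤ -ν * t₀)
    (hbdd : ∀ t, ∀ᵐ ω ∂μ, |Z (t + 1) ω - Z t ω| ≤ νmax) (t : ℕ) {p : ℝ} (hp : 0 < p) :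
    μ {ω | θ + t₀ * νmax + t₀ * (4 * νmax ^ 2 / ν) *
        (log (8 * νmax ^ 2 / ν ^ 2) + log (1 / p)) ≤ Z t ω} ≤ ENNReal.ofReal p := by
  have hνmax : 0 < νmax := hν.trans_le hννmax
  have ht₀' : (0 : ℝ) < t₀ := Nat.cast_pos.mpr ht₀
  have hle (t : ℕ) : ∀ᵐ ω ∂μ, Z t ω ≤ θ + t * νmax := by
    filter_upwards [hZ0, ae_norm_sub_le_mul (Z := Z) hbdd 0 t] with ω h0 ht
    rw [zero_add] at ht
    linarith [le_of_abs_le ht]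
  have htail := measureReal_ge_le_of_drift hZ ht₀ (mul_pos hν ht₀') (L := t₀ * νmax)
    (by rw [mul_comm]; gcongr)
    (fun t ↦ integrable_exp_mul_of_le _ _ (by positivity)
      ((hZ t).mono (ℱ.le t) le_rfl).aemeasurable (hle t))
    (fun t ht ↦ (hle t).mono fun ω hω ↦ hω.trans (by gcongr))
    (fun t ↦ ae_norm_sub_le_mul (Z := Z) hbdd t t₀) (by simpa only [neg_mul] using hdrift) t hp
  have hrate : 4 * (t₀ * νmax) ^ 2 / (ν * t₀) = t₀ * (4 * νmax ^ 2 / ν) := by field_simp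
  have hratio : 8 * (t₀ * νmax) ^ 2 / (ν * t₀) ^ 2 = 8 * νmax ^ 2 / ν ^ 2 := by field_simp
  rw [hrate, hratio] at htail
  rw [← ofReal_measureReal]
  exact ENNReal.ofReal_le_ofReal htail

end

/-- Multi-step Lyapunov drift lemma, tail-probability bound: if the
adapted process `Z` starts at `0`, has a negative `t₀`-step conditional drift
`≤ -ν t₀` on the event `{Z t ≥ θ}`, and bounded increments `|Z (t+1) - Z t| ≤ ν_max`,
then for every `t` and every `p ∈ (0,1)`, `P(Z t ≥ z) ≤ p`, where
`z = θ + t₀ ν_max + t₀ (4 ν_max² / ν)(log (8 ν_max² / ν²) + log (1/p))`. -/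
theorem stmt4 {Ω : Type*} {mΩ : MeasurableSpace Ω} (μ : Measure Ω) [IsProbabilityMeasure μ]
    (ℱ : Filtration ℕ mΩ) (Z : ℕ → Ω → ℝ) (hadapted : Adapted ℱ Z)
    (hZ0 : ∀ ω, Z 0 ω = 0)
    (t₀ : ℕ) (ht₀ : 0 < t₀) (θ ν νmax : ℝ)
    (hθ : 0 ≤ θ) (hν : 0 < ν) (hννmax : ν ≤ νmax)
    (hdrift : ∀ t, ∀ᵐ ω ∂μ, θ ≤ Z t ω →
      (μ[Z (t + t₀) - Z t | ℱ t]) ω ≤ -ν * t₀)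
    (hbdd : ∀ t, ∀ᵐ ω ∂μ, |Z (t + 1) ω - Z t ω| ≤ νmax) :
    ∀ t, ∀ p : ℝ, 0 < p → p < 1 →
      μ {ω | θ + t₀ * νmax + t₀ * (4 * νmax ^ 2 / ν) *
          (Real.log (8 * νmax ^ 2 / ν ^ 2) + Real.log (1 / p)) ≤ Z t ω}
        ≤ ENNReal.ofReal p := by
  intro t p hp _
  exact stmt4_general hadapted ht₀ (ae_of_all μ fun ω ↦ (hZ0 ω).trans_le hθ) hν hννmax
    hdrift hbdd t hp
end

section
/- Consider the COCO-Hard iteration. Then for every t ∈ {1,…,T} and every M ∈ M with g_t(M) ≤ 0 and h(M) ≤ 0: γ g_t⁺(M_{t+1}) + η h⁺(M_{t+1}) + α‖M_{t+1} − M_t‖² ≤ 2 V L D + α‖M − M_t‖² − α‖M − M_{t+1}‖². -/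
open scoped RealInnerProductSpace

/-!
The linearized and penalized loss is convex, so adding `α‖z - M_t‖²` makes the step objective
`2α`-strongly convex. A minimizer of a strongly convex function beats every competitor `y` by the
modulus, here `α‖y - M_{t+1}‖²`. At a feasible `y` the penalties vanish, and what remains of the
linear terms is `V⟪y - M_{t+1}, ∇f_t(M_t)⟫`, which Cauchy-Schwarz bounds by `V L D`.
-/

open Filter Topology

theorem uniformConvexOn_add_modulus_le_of_isMinOn {E : Type*} [NormedAddCommGroup E]
    [NormedSpace ℝ E] {s : Set E} {φ : ℝ → ℝ} {f : E → ℝ} {x y : E} (hf : UniformConvexOn s φ f)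
    (hx : x ∈ s) (hmin : IsMinOn f s x) (hy : y ∈ s) : f x + φ ‖y - x‖ ≤ f y := by
  have hlim : Tendsto (fun b : ℝ => f x + (1 - b) * φ ‖y - x‖) (𝓝[>] 0)
      (𝓝 (f x + φ ‖y - x‖)) :=
    (Continuous.tendsto' (by fun_prop) _ _ (by ring)).mono_left nhdsWithin_le_nhds
  refine le_of_tendsto hlim ?_
  filter_upwards [Ioc_mem_nhdsGT (zero_lt_one' ℝ)] with b ⟨hb0, hb1⟩
  have hb : 0 ≤ 1 - b := sub_nonneg.2 hb1
  have hle : f x ≤ b * f y + (1 - b) * f x - b * (1 - b) * φ ‖y - x‖ :=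
    (isMinOn_iff.1 hmin _ (hf.1 hy hx hb0.le hb (by ring))).trans
      (hf.2 hy hx hb0.le hb (by ring))
  refine le_of_mul_le_mul_left ?_ hb0
  linarith

theorem convexOn_mul_max_zero {E : Type*} [AddCommGroup E] [Module ℝ E] {s : Set E} {g : E → ℝ}
    (hg : ConvexOn ℝ s g) {γ : ℝ} (hγ : 0 ≤ γ) : ConvexOn ℝ s fun z => γ * max (g z) 0 :=
  (hg.sup (convexOn_const 0 hg.1)).smul hγ

section InnerProductSpace

variable {E : Type*} [NormedAddCommGroup E] [InnerProductSpace ℝ E] {s : Set E}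

theorem convexOn_real_inner_sub_left (hs : Convex ℝ s) (x v : E) :
    ConvexOn ℝ s fun z => ⟪z - x, v⟫ := by
  have hlin := ((innerₛₗ ℝ v).convexOn hs).add_const (-⟪x, v⟫)
  refine hlin.congr fun z _ => ?_
  simp only [Pi.add_apply, innerₛₗ_apply_apply, inner_sub_left, real_inner_comm z]
  ring

theorem strongConvexOn_add_mul_sq_norm_sub {φ : E → ℝ} (hφ : ConvexOn ℝ s φ) (α : ℝ) (x : E) :
    StrongConvexOn s (2 * α) fun z => φ z + α * ‖z - x‖ ^ 2 := by
  rw [strongConvexOn_iff_convex]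
  have hlin := convexOn_real_inner_sub_left hφ.1 0 ((-2 * α) • x)
  refine ((hφ.add hlin).add_const (α * ‖x‖ ^ 2)).congr fun z _ => ?_
  simp only [Pi.add_apply, sub_zero, real_inner_smul_right, norm_sub_sq_real]
  ring

theorem add_mul_sq_norm_sub_le_of_isMinOn {φ : E → ℝ} (hφ : ConvexOn ℝ s φ) {α : ℝ} {x x' y : E}
    (hx' : x' ∈ s) (hmin : IsMinOn (fun z => φ z + α * ‖z - x‖ ^ 2) s x') (hy : y ∈ s) :
    φ x' + α * ‖x' - x‖ ^ 2 + α * ‖y - x'‖ ^ 2 ≤ φ y + α * ‖y - x‖ ^ 2 := by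
  have hgrowth := uniformConvexOn_add_modulus_le_of_isMinOn
    (strongConvexOn_add_mul_sq_norm_sub hφ α x) hx' hmin hy
  rwa [mul_div_cancel_left₀ α two_ne_zero] at hgrowth

theorem add_mul_sq_norm_sub_le_of_isMinOn_linearized {p : E → ℝ} (hp : ConvexOn ℝ s p)
    {V α L D : ℝ} (hV : 0 ≤ V) {v x x' y : E} (hv : ‖v‖ ≤ L) (hx' : x' ∈ s)
    (hmin : IsMinOn (fun z => V * ⟪z - x, v⟫ + p z + α * ‖z - x‖ ^ 2) s x') (hy : y ∈ s)
    (hD : ‖y - x'‖ ≤ D) :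
    p x' + α * ‖x' - x‖ ^ 2 ≤ V * L * D + p y + α * ‖y - x‖ ^ 2 - α * ‖y - x'‖ ^ 2 := by
  have hφ : ConvexOn ℝ s fun z => V * ⟪z - x, v⟫ + p z :=
    ((convexOn_real_inner_sub_left hp.1 x v).smul hV).add hp
  have hprox := add_mul_sq_norm_sub_le_of_isMinOn hφ hx' hmin hy
  have hinner : ⟪y - x, v⟫ - ⟪x' - x, v⟫ ≤ L * D :=
    calc ⟪y - x, v⟫ - ⟪x' - x, v⟫ = ⟪v, y - x'⟫ := by
          rw [← inner_sub_left, sub_sub_sub_cancel_right, real_inner_comm]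
      _ ≤ ‖v‖ * ‖y - x'‖ := real_inner_le_norm _ _
      _ ≤ L * D := mul_le_mul hv hD (norm_nonneg _) ((norm_nonneg _).trans hv)
  have hlin := mul_le_mul_of_nonneg_left hinner hV
  linarith

theorem stmt14_general {D : ℝ} (hD : ∀ x ∈ s, ∀ y ∈ s, ‖x - y‖ ≤ D) {T : ℕ} {G : ℕ → E → E}
    {g : ℕ → E → ℝ} {h : E → ℝ} {L : ℝ} (hG : ∀ t ∈ Finset.Icc 1 T, ∀ x ∈ s, ‖G t x‖ ≤ L)
    (hg : ∀ t ∈ Finset.Icc 1 T, ConvexOn ℝ s (g t)) (hh : ConvexOn ℝ s h)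
    {V γ η α : ℝ} (hV : 0 ≤ V) (hγ : 0 ≤ γ) (hη : 0 ≤ η) {M : ℕ → E}
    (hM : ∀ t, 1 ≤ t → M t ∈ s)
    (hmin : ∀ t ∈ Finset.Icc 1 T,
      IsMinOn (fun z => V * ⟪z - M t, G t (M t)⟫ + γ * max (g t z) 0 + η * max (h z) 0 +
        α * ‖z - M t‖ ^ 2) s (M (t + 1))) :
    ∀ t ∈ Finset.Icc 1 T, ∀ y ∈ s, g t y ≤ 0 → h y ≤ 0 →
      γ * max (g t (M (t + 1))) 0 + η * max (h (M (t + 1))) 0 + α * ‖M (t + 1) - M t‖ ^ 2 ≤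
        V * L * D + α * ‖y - M t‖ ^ 2 - α * ‖y - M (t + 1)‖ ^ 2 := by
  intro t ht y hy hgy hhy
  have hMt := hM t (Finset.mem_Icc.1 ht).1
  have hMt' := hM (t + 1) le_add_self
  have hpenalty : ConvexOn ℝ s fun z => γ * max (g t z) 0 + η * max (h z) 0 :=
    (convexOn_mul_max_zero (hg t ht) hγ).add (convexOn_mul_max_zero hh hη)
  have hmin' : IsMinOn (fun z => V * ⟪z - M t, G t (M t)⟫ +
      (γ * max (g t z) 0 + η * max (h z) 0) + α * ‖z - M t‖ ^ 2) s (M (t + 1)) := by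
    simpa only [add_assoc] using hmin t ht
  have hstep := add_mul_sq_norm_sub_le_of_isMinOn_linearized hpenalty hV (hG t ht _ hMt) hMt'
    hmin' hy (hD y hy _ hMt')
  simpa only [max_eq_right hgy, max_eq_right hhy, mul_zero, add_zero] using hstep

end InnerProductSpace

/-- Per-step key inequality for the COCO-Hard iteration: for
every `t ∈ {1,…,T}` and every feasible `M ∈ 𝓜` (with `g_t(M) ≤ 0`, `h(M) ≤ 0`),
`γ g_t⁺(M_{t+1}) + η h⁺(M_{t+1}) + α‖M_{t+1} − M_t‖²
  ≤ 2 V L D + α‖M − M_t‖² − α‖M − M_{t+1}‖²`. -/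
theorem stmt14 {EH : Type*} [NormedAddCommGroup EH] [InnerProductSpace ℝ EH]
    [FiniteDimensional ℝ EH]
    (Mset : Set EH) (hMset : Convex ℝ Mset) (D : ℝ)
    (hD : ∀ x ∈ Mset, ∀ y ∈ Mset, ‖x - y‖ ≤ D)
    (T : ℕ) (f g : ℕ → EH → ℝ) (h : EH → ℝ) (L : ℝ)
    (hf_conv : ∀ t ∈ Finset.Icc 1 T, ConvexOn ℝ Set.univ (f t))
    (hf_diff : ∀ t ∈ Finset.Icc 1 T, Differentiable ℝ (f t))
    (hf_grad : ∀ t ∈ Finset.Icc 1 T, ∀ x ∈ Mset, ‖gradient (f t) x‖ ≤ L)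
    (hg_conv : ∀ t ∈ Finset.Icc 1 T, ConvexOn ℝ Set.univ (g t))
    (hh_conv : ConvexOn ℝ Set.univ h)
    (V γ η α : ℝ) (hV : 0 < V) (hγ : 0 < γ) (hη : 0 < η) (hα : 0 < α)
    (M : ℕ → EH)
    (hM1 : M 1 ∈ Mset)
    (hMmem : ∀ t : ℕ, 1 ≤ t → M (t + 1) ∈ Mset)
    (hMmin : ∀ t : ℕ, 1 ≤ t → ∀ y ∈ Mset,
      V * ⟪M (t + 1) - M t, gradient (f t) (M t)⟫ + γ * max (g t (M (t + 1))) 0 +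
          η * max (h (M (t + 1))) 0 + α * ‖M (t + 1) - M t‖ ^ 2 ≤
        V * ⟪y - M t, gradient (f t) (M t)⟫ + γ * max (g t y) 0 +
          η * max (h y) 0 + α * ‖y - M t‖ ^ 2) :
    ∀ t ∈ Finset.Icc 1 T, ∀ y ∈ Mset, g t y ≤ 0 → h y ≤ 0 →
      γ * max (g t (M (t + 1))) 0 + η * max (h (M (t + 1))) 0 +
          α * ‖M (t + 1) - M t‖ ^ 2 ≤
        2 * V * L * D + α * ‖y - M t‖ ^ 2 - α * ‖y - M (t + 1)‖ ^ 2 := by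
  intro t ht y hy hgy hhy
  have hstep := stmt14_general hD hf_grad
    (fun t ht => (hg_conv t ht).subset (Set.subset_univ _) hMset)
    (hh_conv.subset (Set.subset_univ _) hMset) hV.le hγ.le hη.le
    (Nat.le_induction hM1 fun t ht _ => hMmem t ht)
    (fun t ht => isMinOn_iff.2 (hMmin t (Finset.mem_Icc.1 ht).1)) t ht y hy hgy hhy
  have hL : 0 ≤ L := (norm_nonneg _).trans (hf_grad t ht y hy)
  have hD0 : 0 ≤ D := (norm_nonneg _).trans (hD y hy y hy)
  have hVLD : 0 ≤ V * L * D := by positivity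
  linarith
end

section
/- Consider the COCO-Best2Worlds iteration. Then for every t ∈ {1,…,T} and every M ∈ M: V_t f_t(M_t) + V_t⟨M_{t+1} − M_t, ∇f_t(M_t)⟩ + (1/2)Q_{t+1}² − (1/2)Q_t² + γ_t g_t⁺(M_{t+1}) + η_t h⁺(M_{t+1}) + α_t‖M_{t+1} − M_t‖² ≤ V_t f_t(M) + Q_t(g_t(M) + ε) + ν_max² + γ_t g_t⁺(M) + η_t h⁺(M) + (α_t − λ V_t/2)‖M − M_t‖² − α_t‖M − M_{t+1}‖², where ν_max = E₀ + L D + ε. -/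
open scoped RealInnerProductSpace

/-! The proximal objective is `2 α_t`-strongly convex, so the minimizer `M_{t+1}` undercuts every
competitor by an extra `α_t ‖M - M_{t+1}‖²`. Convexity bounds the linear terms at the competitor by
`f_t` and `g_t`, while squaring the queue recursion turns `Q_t` times the linearized constraint at
`M_{t+1}` into the drift `(Q_{t+1}² - Q_t²) / 2`, up to half the square of a queue increment, which
is at most `ν_max`. -/

section NormedSpace

open scoped Topology

variable {E : Type*} [NormedAddCommGroup E] [NormedSpace ℝ E] {s : Set E} {f : E → ℝ} {x y : E}

theorem add_modulus_le_of_isMinOn_of_uniformConvexOn {φ : ℝ → ℝ} (hf : UniformConvexOn s φ f)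
    (hmin : IsMinOn f s x) (hx : x ∈ s) (hy : y ∈ s) : f x + φ ‖x - y‖ ≤ f y := by
  have h_segment : ∀ θ ∈ Set.Ioo (0 : ℝ) 1, f x + (1 - θ) * φ ‖x - y‖ ≤ f y := by
    rintro θ ⟨hθ₀, hθ₁⟩
    have hθ₁' : 0 ≤ 1 - θ := sub_nonneg.2 hθ₁.le
    have h_min : f x ≤ f ((1 - θ) • x + θ • y) :=
      hmin (hf.1 hx hy hθ₁' hθ₀.le (sub_add_cancel 1 θ))
    have h_conv := hf.2 hx hy hθ₁' hθ₀.le (sub_add_cancel 1 θ)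
    simp only [smul_eq_mul] at h_conv
    refine le_of_mul_le_mul_left ?_ hθ₀
    linarith
  have h_lim : Filter.Tendsto (fun θ : ℝ => f x + (1 - θ) * φ ‖x - y‖) (𝓝[>] 0)
      (𝓝 (f x + (1 - 0) * φ ‖x - y‖)) :=
    (Continuous.tendsto (by fun_prop) 0).mono_left nhdsWithin_le_nhds
  rw [sub_zero, one_mul] at h_lim
  exact le_of_tendsto h_lim (Filter.eventually_of_mem (Ioo_mem_nhdsGT one_pos) h_segment)

theorem add_hasFDerivWithinAt_le_of_convexOn {f' : E →L[ℝ] ℝ} (hf : ConvexOn ℝ s f)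
    (hf' : HasFDerivWithinAt f f' s x) (hx : x ∈ s) (hy : y ∈ s) : f x + f' (y - x) ≤ f y := by
  let ℓ : ℝ →ᵃ[ℝ] E := AffineMap.lineMap x y
  have hℓ₀ : ℓ 0 = x := AffineMap.lineMap_apply_zero x y
  have hℓ₁ : ℓ 1 = y := AffineMap.lineMap_apply_one x y
  have h_deriv : HasDerivWithinAt (f ∘ ℓ) (f' (y - x)) (ℓ ⁻¹' s) 0 :=
    (hℓ₀.symm ▸ hf' : HasFDerivWithinAt f f' s (ℓ 0)).comp_hasDerivWithinAt 0
      AffineMap.hasDerivWithinAt_lineMap (Set.mapsTo_preimage ℓ s)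
  have h_slope : f' (y - x) ≤ slope (f ∘ ℓ) 0 1 :=
    (hf.comp_affineMap ℓ).le_slope_of_hasDerivWithinAt (by simpa [hℓ₀]) (by simpa [hℓ₁])
      one_pos h_deriv
  simp only [slope_def_field, Function.comp_apply, hℓ₀, hℓ₁, sub_zero, div_one] at h_slope
  linarith

end NormedSpace

section InnerProductSpace

variable {E : Type*} [NormedAddCommGroup E] [InnerProductSpace ℝ E] {s : Set E} {φ : E → ℝ}

theorem add_inner_gradient_le_of_convexOn [CompleteSpace E] {x y : E} (hφ : ConvexOn ℝ s φ)
    (hd : DifferentiableAt ℝ φ x) (hx : x ∈ s) (hy : y ∈ s) :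
    φ x + ⟪gradient φ x, y - x⟫ ≤ φ y :=
  add_hasFDerivWithinAt_le_of_convexOn hφ hd.hasGradientAt.hasFDerivAt.hasFDerivWithinAt hx hy

theorem convexOn_inner_sub_left (hs : Convex ℝ s) (c w : E) :
    ConvexOn ℝ s fun z => ⟪z - c, w⟫ := by
  refine (((innerₛₗ ℝ w).convexOn hs).add_const (-⟪c, w⟫)).congr fun z _ => ?_
  simp only [Pi.add_apply, innerₛₗ_apply_apply, real_inner_comm w, inner_sub_right,
    ← sub_eq_add_neg]

theorem strongConvexOn_add_mul_norm_sub_sq (hφ : ConvexOn ℝ s φ) (a : ℝ) (c : E) :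
    StrongConvexOn s (2 * a) fun z => φ z + a * ‖z - c‖ ^ 2 := by
  rw [strongConvexOn_iff_convex]
  refine ((hφ.add (convexOn_inner_sub_left hφ.1 0 (-(2 * a) • c))).add_const (a * ‖c‖ ^ 2)).congr
    fun z _ => ?_
  simp only [Pi.add_apply, sub_zero, real_inner_smul_right, norm_sub_sq_real]
  ring

theorem proximal_three_point {a : ℝ} {c w x y : E} (hφ : ConvexOn ℝ s φ) (hx : x ∈ s) (hy : y ∈ s)
    (hmin : IsMinOn (fun z => ⟪z - c, w⟫ + φ z + a * ‖z - c‖ ^ 2) s x) :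
    ⟪x - c, w⟫ + φ x + a * ‖x - c‖ ^ 2 + a * ‖y - x‖ ^ 2 ≤
      ⟪y - c, w⟫ + φ y + a * ‖y - c‖ ^ 2 := by
  have h_strong := strongConvexOn_add_mul_norm_sub_sq
    ((convexOn_inner_sub_left hφ.1 c w).add hφ) a c
  have h_gap := add_modulus_le_of_isMinOn_of_uniformConvexOn h_strong hmin hx hy
  simpa only [Pi.add_apply, mul_div_cancel_left₀ a two_ne_zero, norm_sub_rev x y] using h_gap

theorem convexOn_posPart_add_posPart {g h : E → ℝ} {γ η : ℝ} (hg : ConvexOn ℝ s g)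
    (hh : ConvexOn ℝ s h) (hγ : 0 ≤ γ) (hη : 0 ≤ η) :
    ConvexOn ℝ s fun z => γ * max (g z) 0 + η * max (h z) 0 :=
  ((hg.sup (convexOn_const 0 hg.1)).smul hγ).add ((hh.sup (convexOn_const 0 hh.1)).smul hη)

theorem abs_add_inner_add_le {b B D L ε : ℝ} {v w : E} (hb : |b| ≤ B) (hv : ‖v‖ ≤ D)
    (hw : ‖w‖ ≤ L) (hε : 0 ≤ ε) : |b + ⟪v, w⟫ + ε| ≤ B + L * D + ε := by
  have h_inner : |⟪v, w⟫| ≤ L * D :=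
    calc |⟪v, w⟫| ≤ ‖v‖ * ‖w‖ := abs_real_inner_le_norm v w
      _ ≤ D * L := mul_le_mul hv hw (norm_nonneg w) ((norm_nonneg v).trans hv)
      _ = L * D := mul_comm D L
  calc |b + ⟪v, w⟫ + ε| ≤ |b| + |⟪v, w⟫| + |ε| := abs_add_three b _ ε
    _ ≤ B + L * D + ε := by rw [abs_of_nonneg hε]; gcongr

end InnerProductSpace

theorem half_sq_max_add_zero_sub_half_sq_le {q d ν : ℝ} (hd : |d| ≤ ν) :
    1 / 2 * max (q + d) 0 ^ 2 - 1 / 2 * q ^ 2 ≤ q * d + 1 / 2 * ν ^ 2 := by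
  have h_max : max (q + d) 0 ^ 2 ≤ (q + d) ^ 2 :=
    sq_le_sq.2 <| (abs_of_nonneg (le_max_right (q + d) 0)).trans_le <|
      max_le (le_abs_self _) (abs_nonneg _)
  have h_inc : d ^ 2 ≤ ν ^ 2 := sq_le_sq.2 (hd.trans (le_abs_self ν))
  linarith

theorem stmt17_general {E : Type*} [NormedAddCommGroup E] [InnerProductSpace ℝ E]
    {S : Set E} {D : ℝ} (hD : ∀ x ∈ S, ∀ y ∈ S, ‖x - y‖ ≤ D)
    {T : ℕ} {f g : ℕ → E → ℝ} {h : E → ℝ} {f' g' : ℕ → E} {L E₀ lam : ℝ}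
    {V γ η α : ℕ → ℝ} {ε : ℝ}
    (hV : ∀ t : ℕ, 1 ≤ t → 0 ≤ V t) (hγ : ∀ t : ℕ, 1 ≤ t → 0 ≤ γ t)
    (hη : ∀ t : ℕ, 1 ≤ t → 0 ≤ η t) (hε : 0 ≤ ε)
    {M : ℕ → E} {Q : ℕ → ℝ} (hM : ∀ t : ℕ, 1 ≤ t → M t ∈ S) (hQ1 : 0 ≤ Q 1)
    (hf : ∀ t ∈ Finset.Icc 1 T, ∀ y ∈ S,
      f t (M t) + ⟪f' t, y - M t⟫ + lam / 2 * ‖y - M t‖ ^ 2 ≤ f t y)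
    (hg_conv : ∀ t ∈ Finset.Icc 1 T, ConvexOn ℝ S (g t))
    (hg : ∀ t ∈ Finset.Icc 1 T, ∀ y ∈ S, g t (M t) + ⟪g' t, y - M t⟫ ≤ g t y)
    (hg_norm : ∀ t ∈ Finset.Icc 1 T, ‖g' t‖ ≤ L)
    (hg_bdd : ∀ t ∈ Finset.Icc 1 T, |g t (M t)| ≤ E₀)
    (hh_conv : ConvexOn ℝ S h)
    (hMmin : ∀ t : ℕ, 1 ≤ t → ∀ y ∈ S,
      V t * ⟪M (t + 1) - M t, f' t⟫ + Q t * ⟪M (t + 1) - M t, g' t⟫ +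
          γ t * max (g t (M (t + 1))) 0 + η t * max (h (M (t + 1))) 0 +
          α t * ‖M (t + 1) - M t‖ ^ 2 ≤
        V t * ⟪y - M t, f' t⟫ + Q t * ⟪y - M t, g' t⟫ +
          γ t * max (g t y) 0 + η t * max (h y) 0 + α t * ‖y - M t‖ ^ 2)
    (hQrec : ∀ t : ℕ, 1 ≤ t →
      Q (t + 1) = max (Q t + g t (M t) + ⟪M (t + 1) - M t, g' t⟫ + ε) 0) :
    ∀ t ∈ Finset.Icc 1 T, ∀ y ∈ S,
      V t * f t (M t) + V t * ⟪M (t + 1) - M t, f' t⟫ +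
          1 / 2 * Q (t + 1) ^ 2 - 1 / 2 * Q t ^ 2 +
          γ t * max (g t (M (t + 1))) 0 + η t * max (h (M (t + 1))) 0 +
          α t * ‖M (t + 1) - M t‖ ^ 2 ≤
        V t * f t y + Q t * (g t y + ε) + 1 / 2 * (E₀ + L * D + ε) ^ 2 +
          γ t * max (g t y) 0 + η t * max (h y) 0 +
          (α t - lam * V t / 2) * ‖y - M t‖ ^ 2 - α t * ‖y - M (t + 1)‖ ^ 2 := by
  intro t ht y hy
  have ht1 : 1 ≤ t := (Finset.mem_Icc.mp ht).1
  have hM' : M (t + 1) ∈ S := hM (t + 1) (Nat.le_add_left 1 t)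
  have hQ : 0 ≤ Q t :=
    Nat.le_induction hQ1 (fun k hk _ => (hQrec k hk).symm ▸ le_max_right _ _) t ht1
  have h_inner (z : E) : ⟪z - M t, V t • f' t + Q t • g' t⟫ =
      V t * ⟪z - M t, f' t⟫ + Q t * ⟪z - M t, g' t⟫ := by
    rw [inner_add_right, real_inner_smul_right, real_inner_smul_right]
  have h_min : IsMinOn (fun z => ⟪z - M t, V t • f' t + Q t • g' t⟫ +
      (γ t * max (g t z) 0 + η t * max (h z) 0) + α t * ‖z - M t‖ ^ 2) S (M (t + 1)) :=
    fun z hz => by simpa only [Set.mem_ofPred_eq, h_inner, ← add_assoc] using hMmin t ht1 z hz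
  have h_prox := proximal_three_point
    (convexOn_posPart_add_posPart (hg_conv t ht) hh_conv (hγ t ht1) (hη t ht1)) hM' hy h_min
  have h_loss := mul_le_mul_of_nonneg_left (hf t ht y hy) (hV t ht1)
  have h_constraint := mul_le_mul_of_nonneg_left (hg t ht y hy) hQ
  have h_drift := half_sq_max_add_zero_sub_half_sq_le (q := Q t) <|
    abs_add_inner_add_le (hg_bdd t ht) (hD _ hM' _ (hM t ht1)) (hg_norm t ht) hε
  rw [← add_assoc, ← add_assoc, ← hQrec t ht1] at h_drift
  rw [h_inner, h_inner] at h_prox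
  rw [real_inner_comm] at h_loss h_constraint
  linarith

/-- Per-step key inequality for the COCO-Best2Worlds iteration
with `λ`-strongly convex losses `f_t`: for every `t ∈ {1,…,T}` and `M ∈ 𝓜`,
`V_t f_t(M_t) + V_t⟨M_{t+1} − M_t, ∇f_t(M_t)⟩ + Q_{t+1}²/2 − Q_t²/2
  + γ_t g_t⁺(M_{t+1}) + η_t h⁺(M_{t+1}) + α_t‖M_{t+1} − M_t‖²
  ≤ V_t f_t(M) + Q_t (g_t(M) + ε) + ν_max² + γ_t g_t⁺(M) + η_t h⁺(M)
    + (α_t − λ V_t/2)‖M − M_t‖² − α_t‖M − M_{t+1}‖²`,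
where `ν_max = E₀ + L D + ε`. -/
theorem stmt17 {EH : Type*} [NormedAddCommGroup EH] [InnerProductSpace ℝ EH]
    [FiniteDimensional ℝ EH]
    (Mset : Set EH) (hMset : Convex ℝ Mset) (D : ℝ)
    (hD : ∀ x ∈ Mset, ∀ y ∈ Mset, ‖x - y‖ ≤ D)
    (T : ℕ) (f g : ℕ → EH → ℝ) (h : EH → ℝ) (L E₀ lam : ℝ) (hlam : 0 < lam)
    (hf_diff : ∀ t ∈ Finset.Icc 1 T, Differentiable ℝ (f t))
    (hf_sconv : ∀ t ∈ Finset.Icc 1 T, ∀ x y : EH,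
      f t x + ⟪gradient (f t) x, y - x⟫ + lam / 2 * ‖y - x‖ ^ 2 ≤ f t y)
    (hf_grad : ∀ t ∈ Finset.Icc 1 T, ∀ x ∈ Mset, ‖gradient (f t) x‖ ≤ L)
    (hg_conv : ∀ t ∈ Finset.Icc 1 T, ConvexOn ℝ Set.univ (g t))
    (hg_diff : ∀ t ∈ Finset.Icc 1 T, Differentiable ℝ (g t))
    (hg_grad : ∀ t ∈ Finset.Icc 1 T, ∀ x ∈ Mset, ‖gradient (g t) x‖ ≤ L)
    (hg_bdd : ∀ t ∈ Finset.Icc 1 T, ∀ x ∈ Mset, |g t x| ≤ E₀)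
    (hh_conv : ConvexOn ℝ Set.univ h)
    (V γ η α : ℕ → ℝ) (ε : ℝ)
    (hV : ∀ t : ℕ, 1 ≤ t → 0 < V t) (hγ : ∀ t : ℕ, 1 ≤ t → 0 < γ t)
    (hη : ∀ t : ℕ, 1 ≤ t → 0 < η t) (hα : ∀ t : ℕ, 1 ≤ t → 0 < α t)
    (hε : 0 ≤ ε)
    (M : ℕ → EH) (Q : ℕ → ℝ)
    (hM1 : M 1 ∈ Mset) (hQ1 : Q 1 = 0)
    (hMmem : ∀ t : ℕ, 1 ≤ t → M (t + 1) ∈ Mset)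
    (hMmin : ∀ t : ℕ, 1 ≤ t → ∀ y ∈ Mset,
      V t * ⟪M (t + 1) - M t, gradient (f t) (M t)⟫ +
          Q t * ⟪M (t + 1) - M t, gradient (g t) (M t)⟫ +
          γ t * max (g t (M (t + 1))) 0 + η t * max (h (M (t + 1))) 0 +
          α t * ‖M (t + 1) - M t‖ ^ 2 ≤
        V t * ⟪y - M t, gradient (f t) (M t)⟫ +
          Q t * ⟪y - M t, gradient (g t) (M t)⟫ +
          γ t * max (g t y) 0 + η t * max (h y) 0 + α t * ‖y - M t‖ ^ 2)
    (hQrec : ∀ t : ℕ, 1 ≤ t →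
      Q (t + 1) =
        max (Q t + g t (M t) + ⟪M (t + 1) - M t, gradient (g t) (M t)⟫ + ε) 0) :
    ∀ t ∈ Finset.Icc 1 T, ∀ y ∈ Mset,
      V t * f t (M t) + V t * ⟪M (t + 1) - M t, gradient (f t) (M t)⟫ +
          1 / 2 * Q (t + 1) ^ 2 - 1 / 2 * Q t ^ 2 +
          γ t * max (g t (M (t + 1))) 0 + η t * max (h (M (t + 1))) 0 +
          α t * ‖M (t + 1) - M t‖ ^ 2 ≤
        V t * f t y + Q t * (g t y + ε) + (E₀ + L * D + ε) ^ 2 +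
          γ t * max (g t y) 0 + η t * max (h y) 0 +
          (α t - lam * V t / 2) * ‖y - M t‖ ^ 2 - α t * ‖y - M (t + 1)‖ ^ 2 := by
  have hM : ∀ t, 1 ≤ t → M t ∈ Mset := Nat.le_induction hM1 fun t ht _ => hMmem t ht
  have hM_Icc : ∀ t ∈ Finset.Icc 1 T, M t ∈ Mset := fun t ht => hM t (Finset.mem_Icc.mp ht).1
  intro t ht y hy
  have h_half := stmt17_general hD (fun t ht => (hV t ht).le) (fun t ht => (hγ t ht).le)
    (fun t ht => (hη t ht).le) hε hM hQ1.ge (fun t ht y _ => hf_sconv t ht (M t) y)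
    (fun t ht => (hg_conv t ht).subset (Set.subset_univ Mset) hMset)
    (fun t ht y _ => add_inner_gradient_le_of_convexOn (hg_conv t ht) (hg_diff t ht (M t))
      (Set.mem_univ (M t)) (Set.mem_univ y))
    (fun t ht => hg_grad t ht (M t) (hM_Icc t ht)) (fun t ht => hg_bdd t ht (M t) (hM_Icc t ht))
    (hh_conv.subset (Set.subset_univ Mset) hMset) hMmin hQrec t ht y hy
  linarith [sq_nonneg (E₀ + L * D + ε)]
end
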